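/- Let G be a 2-connected finite simple graph, Z a cycle in G, λ : E(G) → ℤ/2 an edge labeling, and B a bridge of G with respect to Z such that every proper path in B with both endpoints in V(B) ∩ V(Z) is nontrivial. Then every cycle of G contained in B is trivial, i.e., λ(N) = 0 for every cycle N contained in B. -/

import Mathlib

open SimpleGraph

variable {V : Type*}

/-- The `λ`-value of a walk: the sum in `ℤ/2`, over the edges of the walk counted with
multiplicity, of their labels. -/
def walkLambda (lam : Sym2 V → ZMod 2) {G : SimpleGraph V} {x y : V} (w : G.Walk x y) :
    ZMod 2 :=
  (w.edges.map lam).sum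

/-- `b` can be reached from `a` by a walk in `G` all of whose vertices avoid `Zv`. -/
def ReachAvoiding (G : SimpleGraph V) (Zv : Set V) (a b : V) : Prop :=
  ∃ w : G.Walk a b, ∀ x ∈ w.support, x ∉ Zv

/-- `B` is a bridge of `G` with respect to a cycle with vertex set `Zv` and edge set `Ze`:
either a single edge not of the cycle together with its two endpoints, both on the cycle,
or a connected component of `G − Zv` together with all edges (and their endpoints on the
cycle) joining it to `Zv`. -/
def IsBridgeOf (G : SimpleGraph V) (Zv : Set V) (Ze : Set (Sym2 V)) (B : G.Subgraph) :
    Prop :=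
  (∃ u v, G.Adj u v ∧ s(u, v) ∉ Ze ∧ u ∈ Zv ∧ v ∈ Zv ∧
      B.verts = {u, v} ∧ ∀ a b, B.Adj a b ↔ s(a, b) = s(u, v)) ∨
  (∃ a, a ∉ Zv ∧
      B.verts = {b | ReachAvoiding G Zv a b} ∪
        {z | z ∈ Zv ∧ ∃ c, ReachAvoiding G Zv a c ∧ G.Adj c z} ∧
      ∀ x y, B.Adj x y ↔
        G.Adj x y ∧ (ReachAvoiding G Zv a x ∨ ReachAvoiding G Zv a y))

/-- `w` is a proper walk lying in the subgraph `B`, with respect to a cycle with vertex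
set `Zv` and edge set `Ze`: the walk lies in `B`, none of its vertices lies on the cycle
except possibly its endpoints, and none of its edges is an edge of the cycle. -/
def IsProperWalkIn {G : SimpleGraph V} (B : G.Subgraph) (Zv : Set V) (Ze : Set (Sym2 V))
    {x y : V} (w : G.Walk x y) : Prop :=
  (∀ u ∈ w.support, u ∈ B.verts) ∧ (∀ e ∈ w.edges, e ∈ B.edgeSet) ∧
    (∀ u ∈ w.support, u ∈ Zv → u = x ∨ u = y) ∧ (∀ e ∈ w.edges, e ∉ Ze)

/-- The set of `λ`-values of proper walks in `B` from `x` to the reference vertex `w`. -/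
def labelSet {G : SimpleGraph V} (B : G.Subgraph) (Zv : Set V) (Ze : Set (Sym2 V))
    (lam : Sym2 V → ZMod 2) (x w : V) : Set (ZMod 2) :=
  {t | ∃ ω : G.Walk x w, IsProperWalkIn B Zv Ze ω ∧ walkLambda lam ω = t}

/-- A graph is 2-connected: it has at least three vertices, it is connected, and it
remains connected after the deletion of any single vertex. -/
def TwoConnected (G : SimpleGraph V) : Prop :=
  3 ≤ Nat.card V ∧ G.Connected ∧ ∀ v : V, (G.induce {u | u ≠ v}).Connected

/-!
Suppose a cycle `N` in `B` is nontrivial. Any two vertices of `N` are then joined by an arc of `N`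
of either value. If `B` had three attachments on `Z`, a tripod inside `B` would join them, and the
three proper paths in it would have values summing to `0`, although each of them is `1`; so `B` has
at most two attachments, and every path in `B` between distinct vertices of `Z` is proper. Two
disjoint paths from `N` to `Z`, which exist by 2-connectedness and stay in `B`, can be completed by
either arc of `N`; the right choice gives a trivial path between two attachments.

The two disjoint paths come from moving endpoints: a pair of disjoint walks starting in a set `A`
can be rerouted so that one endpoint moves along an edge and the other stays where it is.
-/

section Label

variable {G : SimpleGraph V} (lam : Sym2 V → ZMod 2)

theorem walkLambda_append {x y z : V} (p : G.Walk x y) (q : G.Walk y z) :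
    walkLambda lam (p.append q) = walkLambda lam p + walkLambda lam q := by
  simp [walkLambda]

theorem walkLambda_reverse {x y : V} (p : G.Walk x y) :
    walkLambda lam p.reverse = walkLambda lam p := by
  simp [walkLambda, List.sum_reverse]

end Label

section Paths

variable {G : SimpleGraph V}

theorem isPath_append {x y z : V} {p : G.Walk x y} {q : G.Walk y z} (hp : p.IsPath)
    (hq : q.IsPath) (hpq : ∀ u ∈ p.support, u ∈ q.support → u = y) : (p.append q).IsPath := by
  have hq_nodup := hq.support_nodup
  rw [← Walk.cons_tail_support, List.nodup_cons] at hq_nodup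
  rw [Walk.isPath_def, Walk.support_append, List.nodup_append']
  refine ⟨hp.support_nodup, hq_nodup.2, fun u hup huq ↦ hq_nodup.1 ?_⟩
  exact hpq u hup (List.mem_of_mem_tail huq) ▸ huq

theorem eq_of_mem_support_of_isPath_append {x y z u : V} {p : G.Walk x y} {q : G.Walk y z}
    (h : (p.append q).IsPath) (hp : u ∈ p.support) (hq : u ∈ q.support) : u = y :=
  by_contra fun hne ↦ h.ne_of_mem_support_of_append hne hp hq rfl

theorem support_subset_of_edges_subset {x y x' y' : V} {p : G.Walk x y} {q : G.Walk x' y'}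
    (hp : ¬ p.Nil) (hpq : p.edges ⊆ q.edges) : p.support ⊆ q.support := fun u hu ↦ by
  obtain ⟨e, he, hue⟩ := (Walk.mem_support_iff_exists_mem_edges_of_not_nil hp).1 hu
  exact q.mem_support_of_mem_edges (hpq he) hue

theorem mem_subgraph_support_of_mem_support {B : G.Subgraph} {x y u : V}
    {w : G.Walk x y} (hw : ¬ w.Nil) (hwB : ∀ e ∈ w.edges, e ∈ B.edgeSet) (hu : u ∈ w.support) :
    u ∈ B.support := by
  obtain ⟨e, he, hue⟩ := (Walk.mem_support_iff_exists_mem_edges_of_not_nil hw).1 hu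
  obtain ⟨v, rfl⟩ := Sym2.mem_iff_exists.1 hue
  exact ⟨v, hwB _ he⟩

theorem exists_isPath_from_set {S : Set V} {x y : V} (w : G.Walk x y)
    (hw : ∃ u ∈ w.support, u ∈ S) :
    ∃ s ∈ S, ∃ p : G.Walk s y, p.IsPath ∧ p.support ⊆ w.support ∧
      ∀ u ∈ p.support, u ∈ S → u = s := by
  classical
  induction w with
  | nil => exact ⟨_, by simpa using hw, Walk.nil, by simp⟩
  | @cons x _ _ hadj q ih =>
    by_cases hq : ∃ u ∈ q.support, u ∈ S
    · obtain ⟨s, hs, p, hp, hpq, hpS⟩ := ih hq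
      exact ⟨s, hs, p, hp, fun u hu ↦ List.mem_cons_of_mem _ (hpq hu), hpS⟩
    · have eq_start : ∀ u ∈ (Walk.cons hadj q).support, u ∈ S → u = x := by
        grind [Walk.support_cons]
      obtain ⟨u, hu, huS⟩ := hw
      have hsub := (Walk.cons hadj q).support_bypass_subset_support
      exact ⟨x, eq_start u hu huS ▸ huS, _, Walk.bypass_isPath _, hsub,
        fun v hv ↦ eq_start v (hsub hv)⟩

theorem exists_isPath_between_sets {S T : Set V} {x y : V} (hx : x ∈ S) (hy : y ∈ T)
    (w : G.Walk x y) :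
    ∃ s ∈ S, ∃ t ∈ T, ∃ p : G.Walk s t, p.IsPath ∧ p.support ⊆ w.support ∧
      (∀ u ∈ p.support, u ∈ S → u = s) ∧ ∀ u ∈ p.support, u ∈ T → u = t := by
  obtain ⟨s, hs, q, -, hqw, hqS⟩ := exists_isPath_from_set w ⟨x, w.start_mem_support, hx⟩
  obtain ⟨t, ht, p, hp, hpq, hpT⟩ :=
    exists_isPath_from_set q.reverse ⟨y, q.reverse.start_mem_support, hy⟩
  rw [Walk.support_reverse] at hpq
  refine ⟨s, hs, t, ht, p.reverse, hp.reverse, ?_, ?_, ?_⟩ <;>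
    grind [Walk.support_reverse]

theorem exists_tripod {x y z : V} (p : G.Walk x y) (q : G.Walk y z) :
    ∃ (d : V) (px : G.Walk d x) (py : G.Walk d y) (pz : G.Walk d z),
      (px.IsPath ∧ py.IsPath ∧ pz.IsPath) ∧
      (∀ u ∈ px.support, u ∈ py.support → u = d) ∧
      (∀ u ∈ px.support, u ∈ pz.support → u = d) ∧
      (∀ u ∈ py.support, u ∈ pz.support → u = d) ∧
      ∀ u, u ∈ px.support ∨ u ∈ py.support ∨ u ∈ pz.support → u ∈ p.support ∨ u ∈ q.support := by
  classical
  obtain ⟨d, hd, pz, hpz, hpz_sub, hpz_meet⟩ :=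
    exists_isPath_from_set (S := {u | u ∈ p.bypass.support}) q
      ⟨y, q.start_mem_support, p.bypass.end_mem_support⟩
  obtain ⟨p₁, p₂, hp₁, hp₂, hp⟩ := p.bypass_isPath.mem_support_iff_exists_append.1 hd
  have hp_sub := p.support_bypass_subset_support
  have hp₁₂ : (p₁.append p₂).IsPath := hp ▸ p.bypass_isPath
  rw [hp] at hpz_meet hp_sub
  refine ⟨d, p₁.reverse, p₂, pz, ⟨hp₁.reverse, hp₂, hpz⟩, ?_, ?_, ?_, ?_⟩
  · exact fun u h₁ h₂ ↦ eq_of_mem_support_of_isPath_append hp₁₂ (by simpa using h₁) h₂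
  all_goals grind [Walk.support_reverse, Walk.mem_support_append_iff]

theorem exists_walk_notMem_support {v x y : V} (hv : (G.induce {u | u ≠ v}).Preconnected)
    (hx : x ≠ v) (hy : y ≠ v) : ∃ w : G.Walk x y, v ∉ w.support := by
  obtain ⟨w⟩ := hv ⟨x, hx⟩ ⟨y, hy⟩
  refine ⟨w.map (Embedding.induce _).toHom, fun hmem ↦ ?_⟩
  obtain ⟨u, -, hu⟩ := List.mem_map.1 (Walk.support_map _ w ▸ hmem)
  exact u.2 hu

end Paths

section DisjointPaths

variable {G : SimpleGraph V} {A T : Set V}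

/-- There are vertex-disjoint walks from `A` to `x` and from `A` to `y`. Walks suffice here: they
are shortened to paths only in `exists_disjoint_isPath`. -/
def DisjointlyReachable (G : SimpleGraph V) (A : Set V) (x y : V) : Prop :=
  ∃ a ∈ A, ∃ b ∈ A, ∃ (p : G.Walk a x) (q : G.Walk b y), p.support.Disjoint q.support

namespace DisjointlyReachable

theorem symm {x y : V} : DisjointlyReachable G A x y → DisjointlyReachable G A y x :=
  fun ⟨a, ha, b, hb, p, q, hpq⟩ ↦ ⟨b, hb, a, ha, q, p, hpq.symm⟩

-- If `x'` lies on the walk `q` to `y`, cut `q` off at `x'` and use a walk to `y` avoiding `x'`: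
-- its last vertex `s` on the rest of `p ∪ q` tells which of `p`, `q` is to be rerouted to `y`.
theorem of_adj {x x' y : V} (hG : (G.induce {u | u ≠ x'}).Preconnected) (hadj : G.Adj x x')
    (hyx' : y ≠ x') (h : DisjointlyReachable G A x y) : DisjointlyReachable G A x' y := by
  classical
  obtain ⟨a, ha, b, hb, p, q, hpq⟩ := h
  by_cases hx'q : x' ∈ q.support
  swap
  · exact ⟨a, ha, b, hb, p.concat hadj, q, by grind [Walk.support_concat, List.Disjoint]⟩
  set q' := q.takeUntil x' hx'q
  have hq' : q'.support ⊆ q.support := q.support_takeUntil_subset_support hx'q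
  have hax' : a ≠ x' := by rintro rfl; exact hpq p.start_mem_support hx'q
  obtain ⟨w, hw⟩ := exists_walk_notMem_support hG hax' hyx'
  obtain ⟨s, ⟨hs, hsx'⟩, r, -, hr, hr_meet⟩ :=
    exists_isPath_from_set (S := {u | (u ∈ p.support ∨ u ∈ q'.support) ∧ u ≠ x'}) w
      ⟨a, w.start_mem_support, Or.inl p.start_mem_support, hax'⟩
  rcases hs with hs | hs
  · have hps := p.support_takeUntil_subset_support hs
    refine ⟨b, hb, a, ha, q', (p.takeUntil s hs).append r, ?_⟩
    grind [List.Disjoint, Walk.mem_support_append_iff]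
  · have hqs := q'.support_takeUntil_subset_support hs
    have hx'qs : x' ∉ (q'.takeUntil s hs).support :=
      q.takeUntil_takeUntil hx'q hs ▸
        Walk.notMem_support_takeUntil_support_takeUntil_subset hsx' hx'q hs
    refine ⟨a, ha, b, hb, p.concat hadj, (q'.takeUntil s hs).append r, ?_⟩
    grind [List.Disjoint, Walk.mem_support_append_iff, Walk.support_concat]

theorem of_walk {x x' y : V} (hG : ∀ v, (G.induce {u | u ≠ v}).Preconnected) (w : G.Walk x x')
    (hyw : y ∉ w.support) (h : DisjointlyReachable G A x y) : DisjointlyReachable G A x' y := by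
  induction w with
  | nil => exact h
  | cons hadj w ih =>
    rw [Walk.support_cons, List.mem_cons, not_or] at hyw
    refine ih hyw.2 (h.of_adj (hG _) hadj ?_)
    rintro rfl
    exact hyw.2 w.start_mem_support

theorem of_ne {x x' y : V} (hG : ∀ v, (G.induce {u | u ≠ v}).Preconnected) (hxy : x ≠ y)
    (hx'y : x' ≠ y) (h : DisjointlyReachable G A x y) : DisjointlyReachable G A x' y := by
  obtain ⟨w, hw⟩ := exists_walk_notMem_support (hG y) hxy hx'y
  exact h.of_walk hG w hw

end DisjointlyReachable

theorem exists_disjointlyReachable (hG : ∀ v, (G.induce {u | u ≠ v}).Preconnected)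
    (hA : A.Nontrivial) (hT : T.Nontrivial) :
    ∃ x ∈ T, ∃ y ∈ T, DisjointlyReachable G A x y := by
  obtain ⟨a, ha, b, hb, hab⟩ := hA
  obtain ⟨x, hx, hxb⟩ := hT.exists_ne b
  obtain ⟨y, hy, hyx⟩ := hT.exists_ne x
  have hab_reach : DisjointlyReachable G A a b :=
    ⟨a, ha, b, hb, Walk.nil, Walk.nil, by simpa using hab.symm⟩
  exact ⟨x, hx, y, hy, ((hab_reach.of_ne hG hab hxb).symm.of_ne hG hxb.symm hyx).symm⟩

theorem exists_disjoint_isPath (hG : ∀ v, (G.induce {u | u ≠ v}).Preconnected)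
    (hA : A.Nontrivial) (hT : T.Nontrivial) :
    ∃ a ∈ A, ∃ b ∈ A, ∃ x ∈ T, ∃ y ∈ T, ∃ (p : G.Walk a x) (q : G.Walk b y),
      (p.IsPath ∧ q.IsPath) ∧ p.support.Disjoint q.support ∧
      (∀ u ∈ p.support, (u ∈ A → u = a) ∧ (u ∈ T → u = x)) ∧
      ∀ u ∈ q.support, (u ∈ A → u = b) ∧ (u ∈ T → u = y) := by
  obtain ⟨x₀, hx₀, y₀, hy₀, a₀, ha₀, b₀, hb₀, p₀, q₀, hdisj⟩ := exists_disjointlyReachable hG hA hT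
  obtain ⟨a, ha, x, hx, p, hp, hpp₀, hpA, hpT⟩ := exists_isPath_between_sets ha₀ hx₀ p₀
  obtain ⟨b, hb, y, hy, q, hq, hqq₀, hqA, hqT⟩ := exists_isPath_between_sets hb₀ hy₀ q₀
  exact ⟨a, ha, b, hb, x, hx, y, hy, p, q, ⟨hp, hq⟩, fun u hup huq ↦ hdisj (hpp₀ hup) (hqq₀ huq),
    fun u hu ↦ ⟨hpA u hu, hpT u hu⟩, fun u hu ↦ ⟨hqA u hu, hqT u hu⟩⟩

end DisjointPaths

section Cycles

variable {G : SimpleGraph V}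

theorem nontrivial_support_of_isCycle {n : V} {N : G.Walk n n} (hN : N.IsCycle) :
    {u | u ∈ N.support}.Nontrivial :=
  ⟨n, N.start_mem_support, N.snd, N.getVert_mem_support 1, (N.adj_snd hN.not_nil).ne⟩

theorem not_isCycle_of_edges_subset_singleton {n : V} {N : G.Walk n n} {e : Sym2 V}
    (hN : ∀ e' ∈ N.edges, e' = e) : ¬ N.IsCycle := fun hcycle ↦ by
  have hle : N.edges.length ≤ [e].length :=
    (hcycle.edges_nodup.subperm fun e' he' ↦ by simpa using hN e' he').length_le
  have := hcycle.three_le_length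
  simp only [Walk.length_edges, List.length_singleton] at hle
  omega

theorem exists_isPath_edges_append_perm_of_isCycle {n x y : V} {N : G.Walk n n} (hN : N.IsCycle)
    (hx : x ∈ N.support) (hy : y ∈ N.support) (hxy : x ≠ y) :
    ∃ p q : G.Walk x y, p.IsPath ∧ q.IsPath ∧ (p.edges ++ q.edges).Perm N.edges := by
  classical
  obtain ⟨p, q, hpq⟩ :=
    Walk.mem_support_iff_exists_append.1 ((N.mem_support_rotate_iff x hx).2 hy)
  have hcycle : (p.append q).IsCycle := hpq ▸ hN.rotate hx
  refine ⟨p, q.reverse, hcycle.isPath_of_append_left (Walk.not_nil_of_ne hxy.symm),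
    (hcycle.isPath_of_append_right (Walk.not_nil_of_ne hxy)).reverse, ?_⟩
  have hedges : (p.edges ++ q.edges).Perm N.edges := by
    simpa [hpq] using (N.rotate_edges x hx).perm
  simpa using ((List.reverse_perm _).append_left _).trans hedges

theorem exists_isPath_walkLambda_eq_of_isCycle {lam : Sym2 V → ZMod 2} {n x y : V}
    {N : G.Walk n n} (hN : N.IsCycle) (hlam : walkLambda lam N ≠ 0)
    (hx : x ∈ N.support) (hy : y ∈ N.support) (hxy : x ≠ y) (t : ZMod 2) :
    ∃ p : G.Walk x y, p.IsPath ∧ p.edges ⊆ N.edges ∧ walkLambda lam p = t := by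
  obtain ⟨p, q, hp, hq, hperm⟩ := exists_isPath_edges_append_perm_of_isCycle hN hx hy hxy
  have hsum : walkLambda lam p + walkLambda lam q ≠ 0 := by
    simpa [walkLambda, ← (hperm.map lam).sum_eq] using hlam
  have eq_or_eq : ∀ a b : ZMod 2, a + b ≠ 0 → a = t ∨ b = t := by decide +revert
  rcases eq_or_eq _ _ hsum with h | h
  · exact ⟨p, hp, fun e he ↦ hperm.subset (List.mem_append_left _ he), h⟩
  · exact ⟨q, hq, fun e he ↦ hperm.subset (List.mem_append_right _ he), h⟩

end Cycles

namespace ReachAvoiding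

variable {G : SimpleGraph V} {Zv : Set V} {a b c : V}

theorem notMem (h : ReachAvoiding G Zv a b) : b ∉ Zv :=
  let ⟨w, hw⟩ := h
  hw b w.end_mem_support

theorem symm (h : ReachAvoiding G Zv a b) : ReachAvoiding G Zv b a :=
  let ⟨w, hw⟩ := h
  ⟨w.reverse, by simpa using hw⟩

theorem trans (hab : ReachAvoiding G Zv a b) (hbc : ReachAvoiding G Zv b c) :
    ReachAvoiding G Zv a c :=
  let ⟨w, hw⟩ := hab
  let ⟨w', hw'⟩ := hbc
  ⟨w.append w', fun _ hx ↦ ((w.mem_support_append_iff w').1 hx).elim (hw _) (hw' _)⟩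

theorem of_adj (hab : ReachAvoiding G Zv a b) (hbc : G.Adj b c) (hc : c ∉ Zv) :
    ReachAvoiding G Zv a c :=
  hab.trans ⟨hbc.toWalk, by simpa using ⟨hab.notMem, hc⟩⟩

end ReachAvoiding

/-- The edges of `B` are the edges of `G` with an end in the connected component of `a` in
`G − Zv`. This is the second kind of bridge in `IsBridgeOf`, up to isolated vertices of `B`. -/
def IsComponentBridge (G : SimpleGraph V) (Zv : Set V) (a : V) (B : G.Subgraph) : Prop :=
  ∀ x y, B.Adj x y ↔ G.Adj x y ∧ (ReachAvoiding G Zv a x ∨ ReachAvoiding G Zv a y)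

/-- The hypothesis on a bridge `B`: proper paths in `B` between distinct attachments have
value `1`. -/
def ProperPathsNontrivial {G : SimpleGraph V} (B : G.Subgraph) (Zv : Set V) (Ze : Set (Sym2 V))
    (lam : Sym2 V → ZMod 2) : Prop :=
  ∀ x y, x ∈ B.verts → x ∈ Zv → y ∈ B.verts → y ∈ Zv → x ≠ y →
    ∀ w : G.Walk x y, w.IsPath → IsProperWalkIn B Zv Ze w → walkLambda lam w ≠ 0

namespace IsComponentBridge

variable {G : SimpleGraph V} {Zv : Set V} {Ze : Set (Sym2 V)} {a : V} {B : G.Subgraph}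
  {lam : Sym2 V → ZMod 2}

theorem mem_or_reachAvoiding (hB : IsComponentBridge G Zv a B) {x y : V} (hxy : B.Adj x y) :
    x ∈ Zv ∨ ReachAvoiding G Zv a x := by
  obtain ⟨hadj, hx | hy⟩ := (hB x y).1 hxy
  · exact Or.inr hx
  · exact or_iff_not_imp_left.2 (hy.of_adj hadj.symm)

theorem exists_reachAvoiding_adj (hB : IsComponentBridge G Zv a B) {z : V} (hz : z ∈ Zv)
    (hzB : z ∈ B.support) : ∃ c, ReachAvoiding G Zv a c ∧ G.Adj c z := by
  obtain ⟨c, hzc⟩ := B.mem_support.1 hzB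
  obtain ⟨hadj, hreach⟩ := (hB z c).1 hzc
  exact ⟨c, hreach.resolve_left fun h ↦ h.notMem hz, hadj.symm⟩

theorem notMem_of_mem_edgeSet (hB : IsComponentBridge G Zv a B)
    (hZe : ∀ e ∈ Ze, ∀ v ∈ e, v ∈ Zv) {e : Sym2 V} (he : e ∈ B.edgeSet) : e ∉ Ze := by
  intro heZ
  induction e with
  | _ x y =>
    rcases ((hB x y).1 he).2 with h | h
    · exact h.notMem (hZe _ heZ x (Sym2.mem_mk_left x y))
    · exact h.notMem (hZe _ heZ y (Sym2.mem_mk_right x y))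

theorem edges_mem_edgeSet (hB : IsComponentBridge G Zv a B) {x y : V} (w : G.Walk x y)
    (hw : w.IsPath) (hx : x ∈ Zv ∨ ReachAvoiding G Zv a x)
    (hwZ : ∀ u ∈ w.support, u ∈ Zv → u = y) : ∀ e ∈ w.edges, e ∈ B.edgeSet := by
  induction w with
  | nil => simp
  | @cons x x' y hadj w ih =>
    obtain ⟨hw_path, hxw⟩ := (Walk.cons_isPath_iff hadj w).1 hw
    have hxZ : x ∉ Zv := fun hxZ ↦
      hxw (hwZ x (Walk.start_mem_support _) hxZ ▸ w.end_mem_support)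
    have hxx' : B.Adj x x' := (hB x x').2 ⟨hadj, Or.inl (hx.resolve_left hxZ)⟩
    rw [Walk.edges_cons, List.forall_mem_cons]
    exact ⟨hxx', ih hw_path (hB.mem_or_reachAvoiding hxx'.symm)
      fun u hu ↦ hwZ u (List.mem_cons_of_mem _ hu)⟩

theorem walkLambda_ne_zero_of_proper (hB : IsComponentBridge G Zv a B)
    (hZe : ∀ e ∈ Ze, ∀ v ∈ e, v ∈ Zv) (hnt : ProperPathsNontrivial B Zv Ze lam) {x y : V}
    (hx : x ∈ Zv) (hy : y ∈ Zv) (hxy : x ≠ y) {w : G.Walk x y} (hw : w.IsPath)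
    (hwB : ∀ e ∈ w.edges, e ∈ B.edgeSet) (hwZ : ∀ u ∈ w.support, u ∈ Zv → u = x ∨ u = y) :
    walkLambda lam w ≠ 0 := by
  have hverts : ∀ u ∈ w.support, u ∈ B.verts := fun u hu ↦
    B.support_subset_verts (mem_subgraph_support_of_mem_support (Walk.not_nil_of_ne hxy) hwB hu)
  exact hnt x y (hverts x w.start_mem_support) hx (hverts y w.end_mem_support) hy hxy w hw
    ⟨hverts, hwB, hwZ, fun e he ↦ hB.notMem_of_mem_edgeSet hZe (hwB e he)⟩

theorem walkLambda_concat_add_ne_zero (hB : IsComponentBridge G Zv a B)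
    (hZe : ∀ e ∈ Ze, ∀ v ∈ e, v ∈ Zv) (hnt : ProperPathsNontrivial B Zv Ze lam)
    {d b c x y : V} (hd : ReachAvoiding G Zv a d) {p : G.Walk d b} {q : G.Walk d c}
    (hp : p.IsPath) (hq : q.IsPath) (hpZ : ∀ u ∈ p.support, u ∉ Zv)
    (hqZ : ∀ u ∈ q.support, u ∉ Zv) (hpq : ∀ u ∈ p.support, u ∈ q.support → u = d)
    (hbx : G.Adj b x) (hcy : G.Adj c y) (hx : x ∈ Zv) (hy : y ∈ Zv) (hxy : x ≠ y) :
    walkLambda lam (p.concat hbx) + walkLambda lam (q.concat hcy) ≠ 0 := by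
  have hpx : (p.concat hbx).IsPath := hp.concat (fun h ↦ hpZ x h hx) hbx
  have hqy : (q.concat hcy).IsPath := hq.concat (fun h ↦ hqZ y h hy) hcy
  have hpB := hB.edges_mem_edgeSet _ hpx (Or.inr hd) (by grind [Walk.support_concat])
  have hqB := hB.edges_mem_edgeSet _ hqy (Or.inr hd) (by grind [Walk.support_concat])
  rw [← walkLambda_reverse lam (p.concat hbx), ← walkLambda_append]
  refine hB.walkLambda_ne_zero_of_proper hZe hnt hx hy hxy (isPath_append hpx.reverse hqy ?_) ?_ ?_
  · grind [Walk.support_reverse, Walk.support_concat]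
  · grind [Walk.edges_append, Walk.edges_reverse]
  · grind [Walk.mem_support_append_iff, Walk.support_reverse, Walk.support_concat]

theorem eq_or_eq_of_mem_support (hB : IsComponentBridge G Zv a B)
    (hZe : ∀ e ∈ Ze, ∀ v ∈ e, v ∈ Zv) (hnt : ProperPathsNontrivial B Zv Ze lam) {x y z : V}
    (hx : x ∈ Zv ∩ B.support) (hy : y ∈ Zv ∩ B.support) (hz : z ∈ Zv ∩ B.support) (hxy : x ≠ y) :
    z = x ∨ z = y := by
  by_contra! hne
  obtain ⟨hzx, hzy⟩ := hne
  obtain ⟨b, hab, hbx⟩ := hB.exists_reachAvoiding_adj hx.1 hx.2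
  obtain ⟨c, hac, hcy⟩ := hB.exists_reachAvoiding_adj hy.1 hy.2
  obtain ⟨e, hae, hez⟩ := hB.exists_reachAvoiding_adj hz.1 hz.2
  obtain ⟨w, hw⟩ := hab.symm.trans hac
  obtain ⟨w', hw'⟩ := hac.symm.trans hae
  obtain ⟨d, p, q, r, ⟨hp, hq, hr⟩, hpq, hpr, hqr, hsub⟩ := exists_tripod w w'
  have havoid : ∀ u, u ∈ p.support ∨ u ∈ q.support ∨ u ∈ r.support → u ∉ Zv := fun u hu ↦
    (hsub u hu).elim (hw u) (hw' u)
  have hpZ : ∀ u ∈ p.support, u ∉ Zv := fun u hu ↦ havoid u (Or.inl hu)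
  have hqZ : ∀ u ∈ q.support, u ∉ Zv := fun u hu ↦ havoid u (Or.inr (Or.inl hu))
  have hrZ : ∀ u ∈ r.support, u ∉ Zv := fun u hu ↦ havoid u (Or.inr (Or.inr hu))
  have hd : ReachAvoiding G Zv a d := hab.trans ⟨p.reverse, by simpa using hpZ⟩
  have hxy_ne := hB.walkLambda_concat_add_ne_zero hZe hnt hd hp hq hpZ hqZ hpq hbx hcy hx.1 hy.1 hxy
  have hxz_ne :=
    hB.walkLambda_concat_add_ne_zero hZe hnt hd hp hr hpZ hrZ hpr hbx hez hx.1 hz.1 hzx.symm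
  have hyz_ne :=
    hB.walkLambda_concat_add_ne_zero hZe hnt hd hq hr hqZ hrZ hqr hcy hez hy.1 hz.1 hzy.symm
  have no_three : ∀ i j k : ZMod 2, i + j ≠ 0 → i + k ≠ 0 → ¬ j + k ≠ 0 := by decide
  exact no_three _ _ _ hxy_ne hxz_ne hyz_ne

theorem walkLambda_ne_zero (hB : IsComponentBridge G Zv a B)
    (hZe : ∀ e ∈ Ze, ∀ v ∈ e, v ∈ Zv) (hnt : ProperPathsNontrivial B Zv Ze lam) {x y : V}
    (hx : x ∈ Zv) (hy : y ∈ Zv) (hxy : x ≠ y) {w : G.Walk x y} (hw : w.IsPath)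
    (hwB : ∀ e ∈ w.edges, e ∈ B.edgeSet) : walkLambda lam w ≠ 0 := by
  have hsupp : ∀ u ∈ w.support, u ∈ B.support := fun u ↦
    mem_subgraph_support_of_mem_support (Walk.not_nil_of_ne hxy) hwB
  exact hB.walkLambda_ne_zero_of_proper hZe hnt hx hy hxy hw hwB fun u hu huZ ↦
    hB.eq_or_eq_of_mem_support hZe hnt ⟨hx, hsupp x w.start_mem_support⟩
      ⟨hy, hsupp y w.end_mem_support⟩ ⟨huZ, hsupp u hu⟩ hxy

theorem walkLambda_eq_zero_of_isCycle (hG : ∀ v, (G.induce {u | u ≠ v}).Preconnected)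
    (hZv : Zv.Nontrivial) (hB : IsComponentBridge G Zv a B) (hZe : ∀ e ∈ Ze, ∀ v ∈ e, v ∈ Zv)
    (hnt : ProperPathsNontrivial B Zv Ze lam) {n : V} {N : G.Walk n n} (hN : N.IsCycle)
    (hNB : ∀ e ∈ N.edges, e ∈ B.edgeSet) : walkLambda lam N = 0 := by
  by_contra hlam
  obtain ⟨s, hs, t, ht, x, hx, y, hy, p, q, ⟨hp, hq⟩, hpq, hp_meet, hq_meet⟩ :=
    exists_disjoint_isPath hG (nontrivial_support_of_isCycle hN) hZv
  have hst : s ≠ t := by rintro rfl; exact hpq p.start_mem_support q.start_mem_support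
  have hxy : x ≠ y := by rintro rfl; exact hpq p.end_mem_support q.end_mem_support
  have hN_reach : ∀ u ∈ N.support, u ∈ Zv ∨ ReachAvoiding G Zv a u := fun u hu ↦
    let ⟨_, huv⟩ := mem_subgraph_support_of_mem_support hN.not_nil hNB hu
    hB.mem_or_reachAvoiding huv
  have hpB := hB.edges_mem_edgeSet p hp (hN_reach s hs) fun u hu ↦ (hp_meet u hu).2
  have hqB := hB.edges_mem_edgeSet q hq (hN_reach t ht) fun u hu ↦ (hq_meet u hu).2
  obtain ⟨r, hr, hrN, hr_lam⟩ := exists_isPath_walkLambda_eq_of_isCycle hN hlam hs ht hst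
    (walkLambda lam p + walkLambda lam q)
  have hr_supp : r.support ⊆ N.support :=
    support_subset_of_edges_subset (Walk.not_nil_of_ne hst) hrN
  have hrq : (r.append q).IsPath := isPath_append hr hq fun u hur huq ↦
    (hq_meet u huq).1 (hr_supp hur)
  have hprq : (p.reverse.append (r.append q)).IsPath := isPath_append hp.reverse hrq <| by
    grind [Walk.support_reverse, Walk.mem_support_append_iff, List.Disjoint]
  refine hB.walkLambda_ne_zero hZe hnt hx hy hxy hprq ?_ ?_
  · grind [Walk.edges_append, Walk.edges_reverse]
  · rw [walkLambda_append, walkLambda_append, walkLambda_reverse, hr_lam]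
    grind

end IsComponentBridge

theorem statement8_general {G : SimpleGraph V} {lam : Sym2 V → ZMod 2}
    (hG : ∀ v, (G.induce {u | u ≠ v}).Preconnected) {Zv : Set V} (hZv : Zv.Nontrivial)
    {Ze : Set (Sym2 V)} (hZe : ∀ e ∈ Ze, ∀ v ∈ e, v ∈ Zv) {B : G.Subgraph}
    (hB : IsBridgeOf G Zv Ze B) (hnt : ProperPathsNontrivial B Zv Ze lam) {n : V}
    {N : G.Walk n n} (hN : N.IsCycle) (hNB : ∀ e ∈ N.edges, e ∈ B.edgeSet) :
    walkLambda lam N = 0 := by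
  rcases hB with ⟨u, v, -, -, -, -, -, hB_edge⟩ | ⟨a, -, -, hB_component⟩
  · have hB_edge_eq : ∀ e ∈ B.edgeSet, e = s(u, v) := fun e ↦
      Sym2.ind (fun x y ↦ (hB_edge x y).1) e
    exact (not_isCycle_of_edges_subset_singleton (fun e he ↦ hB_edge_eq e (hNB e he)) hN).elim
  · exact IsComponentBridge.walkLambda_eq_zero_of_isCycle hG hZv hB_component hZe hnt hN hNB

/-- In a 2-connected graph, if every proper path in a bridge `B` with both
(distinct) endpoints in `V(B) ∩ V(Z)` is nontrivial, then every cycle of `G` contained in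
`B` is trivial. -/
theorem statement8 [Fintype V] (G : SimpleGraph V) (lam : Sym2 V → ZMod 2)
    (h2 : TwoConnected G)
    (z₀ : V) (Z : G.Walk z₀ z₀) (hZ : Z.IsCycle) (B : G.Subgraph)
    (hB : IsBridgeOf G {u | u ∈ Z.support} {e | e ∈ Z.edges} B)
    (hnt : ∀ x y, x ∈ B.verts → x ∈ Z.support → y ∈ B.verts → y ∈ Z.support → x ≠ y →
      ∀ w : G.Walk x y, w.IsPath →
        IsProperWalkIn B {u | u ∈ Z.support} {e | e ∈ Z.edges} w →
        walkLambda lam w ≠ 0) :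
    ∀ (n : V) (N : G.Walk n n), N.IsCycle → (∀ e ∈ N.edges, e ∈ B.edgeSet) →
      walkLambda lam N = 0 :=
  fun _ _ hN hNB ↦ statement8_general (fun v ↦ (h2.2.2 v).preconnected)
    (nontrivial_support_of_isCycle hZ) (fun _ he _ hv ↦ Z.mem_support_of_mem_edges he hv) hB hnt
    hN hNB
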